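/- At every point x ∈ U₀, the series F satisfies the inhomogeneous equation Σ_{i=1}^n x_{2i}·∂F/∂x_{2i}(x) + (γ+1)·F(x) = g(b,x) − g(a,x), where g(t,x) = t^{γ+1} ∏_{k=1}^n (x_{1k} + x_{2k} t)^{α_k}. -/

import Mathlib

open Complex Function Polynomial

/-- Partial derivative of `f` with respect to the coordinate `p`. -/
noncomputable def pd {n : ℕ} (p : Fin 2 × Fin n)
    (f : ((Fin 2 × Fin n) → ℝ) → ℂ) (x : (Fin 2 × Fin n) → ℝ) : ℂ :=
  deriv (fun s : ℝ => f (Function.update x p s)) (x p)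

/-- The coefficient
`c_m = (−1)^{|m|} (∏ₖ (−α_k)_{m_k}) (b^{γ+|m|+1} − a^{γ+|m|+1}) / ((γ+|m|+1) ∏ₖ m_k!)`,
where `(z)_j` is the Pochhammer symbol. -/
noncomputable def cm {n : ℕ} (α : Fin n → ℂ) (γ : ℂ) (a b : ℝ)
    (m : Fin n → ℕ) : ℂ :=
  (-1 : ℂ) ^ (∑ k, m k) * (∏ k, (ascPochhammer ℂ (m k)).eval (-(α k)))
    * ((b : ℂ) ^ (γ + ((∑ k, m k : ℕ) : ℂ) + 1)
        - (a : ℂ) ^ (γ + ((∑ k, m k : ℕ) : ℂ) + 1))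
    / ((γ + ((∑ k, m k : ℕ) : ℂ) + 1) * ∏ k, ((m k).factorial : ℂ))

/-- The series `F(x) = (∏ₖ x_{1k}^{α_k}) Σ_{m ∈ ℕⁿ} c_m ∏ₖ (x_{2k}/x_{1k})^{m_k}`;
the first row of `x` is indexed by `0 : Fin 2`, the second row by `1 : Fin 2`. -/
noncomputable def Fser {n : ℕ} (α : Fin n → ℂ) (γ : ℂ) (a b : ℝ)
    (x : (Fin 2 × Fin n) → ℝ) : ℂ :=
  (∏ k, (x (0, k) : ℂ) ^ (α k)) *
    ∑' m : Fin n → ℕ, cm α γ a b m * ∏ k, ((x (1, k) / x (0, k) : ℝ) : ℂ) ^ m k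

/-- `g(t,x) = t^(γ+1) ∏ₖ (x_{1k} + x_{2k} t)^{α_k}`. -/
noncomputable def gfun {n : ℕ} (α : Fin n → ℂ) (γ : ℂ) (t : ℝ)
    (x : (Fin 2 × Fin n) → ℝ) : ℂ :=
  (t : ℂ) ^ (γ + 1) * ∏ k, ((x (0, k) : ℂ) + (x (1, k) : ℂ) * (t : ℂ)) ^ (α k)

/-!
Up to the prefactor `∏ₖ x_{1k}^{α_k}`, the function `F` is a power series in `y_k = x_{2k} / x_{1k}`
and `Σᵢ x_{2i} ∂/∂x_{2i}` is the Euler operator in `y`, which multiplies the term of multi-index `m`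
by `|m|`. Hence `Σᵢ x_{2i} ∂/∂x_{2i} + (γ + 1)` cancels the denominators `γ + |m| + 1` of the `c_m`.
The remaining coefficients are, for each endpoint `t ∈ {a, b}`, those of the binomial expansion of
`t^(γ+1) ∏ₖ (1 + t y_k)^{α_k}`. The series may be differentiated termwise because it
converges normally on a complex polydisc slightly larger than the one through `y`.
-/

open Filter Topology

section ProductSums
variable {ι κ : Type*} [Fintype ι]

theorem summable_pi_prod_of_nonneg {f : ι → κ → ℝ} (hf₀ : ∀ k j, 0 ≤ f k j)
    (hf : ∀ k, Summable (f k)) : Summable fun m : ι → κ => ∏ k, f k (m k) := by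
  classical
  refine summable_of_sum_le (c := ∏ k, ∑' j, f k j)
    (fun m => Finset.prod_nonneg fun k _ => hf₀ k _) fun s => ?_
  calc ∑ m ∈ s, ∏ k, f k (m k)
      ≤ ∑ m ∈ Fintype.piFinset fun k => s.image (· k), ∏ k, f k (m k) :=
        Finset.sum_le_sum_of_subset_of_nonneg
          (fun m hm => Fintype.mem_piFinset.2 fun k => Finset.mem_image_of_mem (· k) hm)
          fun m _ _ => Finset.prod_nonneg fun k _ => hf₀ k _
    _ = ∏ k, ∑ j ∈ s.image (· k), f k j := (Finset.prod_univ_sum _ _).symm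
    _ ≤ ∏ k, ∑' j, f k j :=
        Finset.prod_le_prod (fun k _ => Finset.sum_nonneg fun j _ => hf₀ k j)
          fun k _ => (hf k).sum_le_tsum _ fun j _ => hf₀ k j

theorem hasSum_pi_prod {R : Type*} [NormedCommRing R] [NormOneClass R] [CompleteSpace R]
    {f : ι → κ → R} {s : ι → R} (hf : ∀ k, HasSum (f k) (s k))
    (hf_norm : ∀ k, Summable fun j => ‖f k j‖) :
    HasSum (fun m : ι → κ => ∏ k, f k (m k)) (∏ k, s k) := by
  classical
  have h_summable : Summable fun m : ι → κ => ∏ k, f k (m k) :=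
    .of_norm_bounded (summable_pi_prod_of_nonneg (fun _ _ => norm_nonneg _) hf_norm)
      fun m => Finset.norm_prod_le _ _
  -- The boxes `t ^ ι` are cofinal among the finite sets of multi-indices.
  have h_boxes : Tendsto (fun t : Finset κ => Fintype.piFinset fun _ : ι => t) atTop atTop :=
    tendsto_atTop_finset_of_monotone
      (fun _ _ h => Fintype.piFinset_subset _ _ fun _ => h)
      fun m => ⟨Finset.univ.image m, by simp⟩
  have h_prod : Tendsto (fun t => ∏ k, ∑ j ∈ t, f k j) atTop (𝓝 (∏ k, s k)) :=
    tendsto_finsetProd _ fun k _ => hf k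
  have h_tsum := h_summable.hasSum.comp h_boxes
  simp only [Function.comp_def, ← Finset.prod_univ_sum] at h_tsum
  exact tendsto_nhds_unique h_tsum h_prod ▸ h_summable.hasSum

end ProductSums

section MultivariateSeries
variable {ι : Type*}

theorem norm_update_lt [DecidableEq ι] {R : ι → ℝ} {y : ι → ℂ} (hy : ∀ k, ‖y k‖ < R k)
    {i : ι} {w : ℂ} (hw : w ∈ Metric.ball 0 (R i)) (k : ι) : ‖Function.update y i w k‖ < R k := by
  rcases eq_or_ne k i with rfl | hk
  · simpa using hw
  · simpa [hk] using hy k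

variable [Fintype ι]

/-- The sum of the power series `∑ c_m y^m` in finitely many variables. -/
noncomputable def multiSeries (c : (ι → ℕ) → ℂ) (y : ι → ℂ) : ℂ :=
  ∑' m, c m * ∏ k, y k ^ m k

variable {c : (ι → ℕ) → ℂ} {R : ι → ℝ} {y : ι → ℂ}

theorem norm_mul_prod_pow_le (c : (ι → ℕ) → ℂ) (hy : ∀ k, ‖y k‖ ≤ R k) (m : ι → ℕ) :
    ‖c m * ∏ k, y k ^ m k‖ ≤ ‖c m‖ * ∏ k, R k ^ m k := by
  rw [norm_mul, norm_prod]
  simp only [norm_pow]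
  gcongr with k
  exact hy k

theorem hasSum_multiSeries (hR : Summable fun m => ‖c m‖ * ∏ k, R k ^ m k)
    (hy : ∀ k, ‖y k‖ ≤ R k) :
    HasSum (fun m => c m * ∏ k, y k ^ m k) (multiSeries c y) :=
  (Summable.of_norm_bounded hR (norm_mul_prod_pow_le c hy)).hasSum

variable [DecidableEq ι]

theorem prod_update_pow (y : ι → ℂ) (m : ι → ℕ) (i : ι) (w : ℂ) :
    ∏ k, Function.update y i w k ^ m k = w ^ m i * ∏ k ∈ Finset.univ.erase i, y k ^ m k := by
  rw [← Finset.mul_prod_erase _ _ (Finset.mem_univ i), Function.update_self]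
  congr 1
  exact Finset.prod_congr rfl fun k hk => by rw [Function.update_of_ne (Finset.ne_of_mem_erase hk)]

theorem hasDerivAt_mul_prod_update_pow (y : ι → ℂ) (m : ι → ℕ) (i : ι) (w : ℂ) :
    HasDerivAt (fun w => c m * ∏ k, Function.update y i w k ^ m k)
      (c m * (m i * w ^ (m i - 1) * ∏ k ∈ Finset.univ.erase i, y k ^ m k)) w := by
  simp only [prod_update_pow]
  exact ((hasDerivAt_pow _ _).mul_const _).const_mul _

theorem differentiableAt_multiSeries_update (hR : Summable fun m => ‖c m‖ * ∏ k, R k ^ m k)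
    (hy : ∀ k, ‖y k‖ < R k) (i : ι) :
    DifferentiableAt ℂ (fun w => multiSeries c (Function.update y i w)) (y i) :=
  (Complex.differentiableOn_tsum_of_summable_norm hR
    (fun m w _ => (hasDerivAt_mul_prod_update_pow y m i w).differentiableAt.differentiableWithinAt)
    Metric.isOpen_ball
    fun m _ hw => norm_mul_prod_pow_le c (fun k => (norm_update_lt hy hw k).le) m).differentiableAt
    (Metric.isOpen_ball.mem_nhds (mem_ball_zero_iff.2 (hy i)))

theorem hasSum_mul_deriv_multiSeries_update (hR : Summable fun m => ‖c m‖ * ∏ k, R k ^ m k)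
    (hy : ∀ k, ‖y k‖ < R k) (i : ι) :
    HasSum (fun m => m i * (c m * ∏ k, y k ^ m k))
      (y i * deriv (fun w => multiSeries c (Function.update y i w)) (y i)) := by
  refine ((Complex.hasSum_deriv_of_summable_norm hR
    (fun m w _ => (hasDerivAt_mul_prod_update_pow y m i w).differentiableAt.differentiableWithinAt)
    Metric.isOpen_ball
    (fun m _ hw => norm_mul_prod_pow_le c (fun k => (norm_update_lt hy hw k).le) m)
    (mem_ball_zero_iff.2 (hy i))).mul_left (y i)).congr_fun fun m => ?_
  rw [(hasDerivAt_mul_prod_update_pow y m i (y i)).deriv,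
    ← Finset.mul_prod_erase _ _ (Finset.mem_univ i)]
  rcases Nat.eq_zero_or_pos (m i) with h | h
  · simp [h]
  · rw [← mul_pow_sub_one h.ne' (y i)]
    ring

theorem hasSum_euler_multiSeries (hR : Summable fun m => ‖c m‖ * ∏ k, R k ^ m k)
    (hy : ∀ k, ‖y k‖ < R k) :
    HasSum (fun m => ((∑ k, m k : ℕ) : ℂ) * (c m * ∏ k, y k ^ m k))
      (∑ i, y i * deriv (fun w => multiSeries c (Function.update y i w)) (y i)) :=
  (hasSum_sum fun i _ => hasSum_mul_deriv_multiSeries_update hR hy i).congr_fun fun m => by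
    rw [← Finset.sum_mul, Nat.cast_sum]

end MultivariateSeries

section BinomialSeries

theorem choose_eq_ascPochhammer_eval_neg (α : ℂ) (j : ℕ) :
    Ring.choose α j = (-1) ^ j * (ascPochhammer ℂ j).eval (-α) / j.factorial := by
  rw [Ring.choose_eq_smul, ascPochhammer_eval_neg_eq_descPochhammer, ← mul_assoc, ← mul_pow,
    descPochhammer_smeval_eq_ascPochhammer, ascPochhammer_smeval_cast, ascPochhammer_smeval_eq_eval,
    ← descPochhammer_eval_eq_ascPochhammer, div_eq_inv_mul]
  simp

theorem hasSum_choose_mul_pow (α : ℂ) {z : ℂ} (hz : ‖z‖ < 1) :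
    HasSum (fun j => Ring.choose α j * z ^ j) ((1 + z) ^ α) := by
  have hz' : z ∈ Metric.eball (0 : ℂ) 1 := by
    rwa [← ENNReal.ofReal_one, Metric.eball_ofReal, mem_ball_zero_iff]
  simpa [binomialSeries_apply, -FormalMultilinearSeries.apply_eq_prod_smul_coeff] using
    Complex.one_add_cpow_hasFPowerSeriesOnBall_zero (a := α) |>.hasSum hz'

theorem summable_norm_choose_mul_pow (α : ℂ) {z : ℂ} (hz : ‖z‖ < 1) :
    Summable fun j => ‖Ring.choose α j * z ^ j‖ :=
  (hasSum_choose_mul_pow α hz).summable.norm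

variable {ι : Type*} [Fintype ι]

/-- The coefficient of `z^m` in the expansion of `∏ k, (1 + z k) ^ α k`. -/
noncomputable def multiChoose (α : ι → ℂ) (m : ι → ℕ) : ℂ :=
  ∏ k, Ring.choose (α k) (m k)

theorem hasSum_multiChoose_mul_pow (α : ι → ℂ) {z : ι → ℂ} (hz : ∀ k, ‖z k‖ < 1) :
    HasSum (fun m => multiChoose α m * ∏ k, z k ^ m k) (∏ k, (1 + z k) ^ α k) := by
  simp only [multiChoose, ← Finset.prod_mul_distrib]
  exact hasSum_pi_prod (f := fun k j => Ring.choose (α k) j * z k ^ j)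
    (fun k => hasSum_choose_mul_pow (α k) (hz k))
    fun k => summable_norm_choose_mul_pow (α k) (hz k)

end BinomialSeries

section EndpointCoefficients

theorem exists_norm_inv_add_natCast_le (z : ℂ) : ∃ K, ∀ j : ℕ, ‖(z + j)⁻¹‖ ≤ K := by
  have h : Tendsto (fun j : ℕ => (z + j)⁻¹) atTop (𝓝 0) :=
    tendsto_inv₀_cobounded.comp <|
      (tendsto_const_add_cobounded z).comp tendsto_natCast_atTop_cobounded
  obtain ⟨K, hK⟩ := (Metric.isBounded_range_of_tendsto _ h).exists_norm_le
  exact ⟨K, fun j => hK _ ⟨j, rfl⟩⟩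

variable {ι : Type*} [Fintype ι] (α : ι → ℂ) (γ : ℂ) {t : ℂ}

/-- The contribution of the endpoint `t` to the coefficient `cm`. Formally, it is the coefficient of
`y^m` in the primitive of `t ↦ t^γ ∏ₖ (1 + t y_k)^{α_k}`. -/
noncomputable def endpointCoeff (α : ι → ℂ) (γ t : ℂ) (m : ι → ℕ) : ℂ :=
  multiChoose α m * t ^ (γ + (∑ k, m k : ℕ) + 1) / (γ + (∑ k, m k : ℕ) + 1)

theorem cm_eq_endpointCoeff_sub {n : ℕ} (α : Fin n → ℂ) (γ : ℂ) (a b : ℝ) (m : Fin n → ℕ) :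
    cm α γ a b m = endpointCoeff α γ b m - endpointCoeff α γ a m := by
  simp only [cm, endpointCoeff, multiChoose, choose_eq_ascPochhammer_eval_neg,
    Finset.prod_div_distrib, Finset.prod_mul_distrib, Finset.prod_pow_eq_pow_sum]
  rw [← sub_div, ← mul_sub, div_mul_eq_mul_div, div_div, mul_comm (∏ k, _)]

theorem endpointCoeff_mul_prod_pow (ht : t ≠ 0) (y : ι → ℂ) (m : ι → ℕ) :
    endpointCoeff α γ t m * ∏ k, y k ^ m k =
      t ^ (γ + 1) * (γ + 1 + (∑ k, m k : ℕ))⁻¹ *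
        (multiChoose α m * ∏ k, (t * y k) ^ m k) := by
  rw [endpointCoeff, add_right_comm, Complex.cpow_add _ _ ht, Complex.cpow_natCast]
  simp only [mul_pow, Finset.prod_mul_distrib, Finset.prod_pow_eq_pow_sum]
  ring

theorem summable_norm_endpointCoeff_mul_pow (ht : t ≠ 0) {R : ι → ℝ} (hR₀ : ∀ k, 0 ≤ R k)
    (hR : ∀ k, ‖t‖ * R k < 1) :
    Summable fun m => ‖endpointCoeff α γ t m‖ * ∏ k, R k ^ m k := by
  obtain ⟨K, hK⟩ := exists_norm_inv_add_natCast_le (γ + 1)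
  have h_binomial := (hasSum_multiChoose_mul_pow α (z := fun k => t * R k) fun k => by
    simpa [abs_of_nonneg (hR₀ k)] using hR k).summable.norm
  refine (h_binomial.mul_left (‖t ^ (γ + 1)‖ * K)).of_nonneg_of_le
    (fun m => mul_nonneg (norm_nonneg _) (Finset.prod_nonneg fun k _ => pow_nonneg (hR₀ k) _))
    fun m => ?_
  calc ‖endpointCoeff α γ t m‖ * ∏ k, R k ^ m k
      = ‖endpointCoeff α γ t m * ∏ k, (R k : ℂ) ^ m k‖ := by
        simp only [norm_mul, norm_prod, norm_pow, Complex.norm_of_nonneg (hR₀ _)]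
    _ = ‖t ^ (γ + 1)‖ * ‖(γ + 1 + (∑ k, m k : ℕ))⁻¹‖ *
          ‖multiChoose α m * ∏ k, (t * R k) ^ m k‖ := by
        rw [endpointCoeff_mul_prod_pow α γ ht, norm_mul, norm_mul]
    _ ≤ ‖t ^ (γ + 1)‖ * K * ‖multiChoose α m * ∏ k, (t * R k) ^ m k‖ := by
        gcongr
        exact hK _

theorem hasSum_euler_endpointCoeff (hγ : ∀ j : ℕ, γ + 1 + j ≠ 0) (ht : t ≠ 0) {y : ι → ℂ}
    (hy : ∀ k, ‖t * y k‖ < 1) :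
    HasSum (fun m => (γ + 1 + (∑ k, m k : ℕ)) * (endpointCoeff α γ t m * ∏ k, y k ^ m k))
      (t ^ (γ + 1) * ∏ k, (1 + t * y k) ^ α k) :=
  ((hasSum_multiChoose_mul_pow α hy).mul_left _).congr_fun fun m => by
    have h_den := hγ (∑ k, m k)
    rw [endpointCoeff_mul_prod_pow α γ ht]
    field_simp

end EndpointCoefficients

section EulerEquation
variable {n : ℕ} (α : Fin n → ℂ) (γ : ℂ) {a b : ℝ}

theorem summable_norm_cm_mul_pow (ha : a ≠ 0) (hb : b ≠ 0) {R : Fin n → ℝ} (hR₀ : ∀ k, 0 ≤ R k)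
    (hR : ∀ k, max |a| |b| * R k < 1) :
    Summable fun m => ‖cm α γ a b m‖ * ∏ k, R k ^ m k := by
  have h_endpoint {t : ℝ} (ht₀ : t ≠ 0) (ht : |t| ≤ max |a| |b|) :=
    summable_norm_endpointCoeff_mul_pow α γ (Complex.ofReal_ne_zero.2 ht₀) hR₀ fun k => by
      rw [Complex.norm_real, Real.norm_eq_abs]
      exact (mul_le_mul_of_nonneg_right ht (hR₀ k)).trans_lt (hR k)
  have h_prod_nonneg (m : Fin n → ℕ) : 0 ≤ ∏ k, R k ^ m k :=
    Finset.prod_nonneg fun k _ => pow_nonneg (hR₀ k) _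
  refine ((h_endpoint hb (le_max_right _ _)).add (h_endpoint ha (le_max_left _ _))).of_nonneg_of_le
    (fun m => mul_nonneg (norm_nonneg _) (h_prod_nonneg m)) fun m => ?_
  rw [cm_eq_endpointCoeff_sub, ← add_mul]
  exact mul_le_mul_of_nonneg_right (norm_sub_le _ _) (h_prod_nonneg m)

theorem euler_multiSeries_cm (ha : a ≠ 0) (hb : b ≠ 0) (hγ : ∀ j : ℕ, γ + 1 + j ≠ 0)
    {R : Fin n → ℝ} (hR : ∀ k, max |a| |b| * R k < 1) {y : Fin n → ℂ} (hy : ∀ k, ‖y k‖ < R k) :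
    ∑ i, y i * deriv (fun w => multiSeries (cm α γ a b) (Function.update y i w)) (y i)
        + (γ + 1) * multiSeries (cm α γ a b) y
      = b ^ (γ + 1) * ∏ k, (1 + b * y k) ^ α k - a ^ (γ + 1) * ∏ k, (1 + a * y k) ^ α k := by
  have h_summable := summable_norm_cm_mul_pow α γ ha hb
    (fun k => (norm_nonneg _).trans (hy k).le) hR
  have h_lhs := (hasSum_euler_multiSeries h_summable hy).add
    ((hasSum_multiSeries h_summable fun k => (hy k).le).mul_left (γ + 1))
  have h_endpoint {t : ℝ} (ht₀ : t ≠ 0) (ht : |t| ≤ max |a| |b|) :=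
    hasSum_euler_endpointCoeff α γ hγ (Complex.ofReal_ne_zero.2 ht₀) (y := y) fun k => by
      rw [norm_mul, Complex.norm_real, Real.norm_eq_abs]
      exact (mul_le_mul ht (hy k).le (norm_nonneg _) ((abs_nonneg t).trans ht)).trans_lt (hR k)
  refine h_lhs.unique (((h_endpoint hb (le_max_right _ _)).sub
    (h_endpoint ha (le_max_left _ _))).congr_fun fun m => ?_)
  rw [cm_eq_endpointCoeff_sub]
  ring

end EulerEquation

section AffineCoordinates
variable {n : ℕ} (α : Fin n → ℂ) (γ : ℂ) (a b : ℝ) (x : Fin 2 × Fin n → ℝ)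

/-- The prefactor `∏ₖ x_{1k}^{α_k}` of `Fser`. -/
noncomputable def prefactor (α : Fin n → ℂ) (x : Fin 2 × Fin n → ℝ) : ℂ :=
  ∏ k, (x (0, k) : ℂ) ^ α k

/-- The affine coordinates `x_{2k} / x_{1k}` in which `Fser` is a power series. -/
noncomputable def ratio (x : Fin 2 × Fin n → ℝ) (k : Fin n) : ℂ :=
  (x (1, k) / x (0, k) : ℝ)

theorem Fser_eq_prefactor_mul_multiSeries :
    Fser α γ a b x = prefactor α x * multiSeries (cm α γ a b) (ratio x) :=
  rfl

theorem prefactor_update_snd (i : Fin n) (s : ℝ) :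
    prefactor α (Function.update x (1, i) s) = prefactor α x := by
  simp [prefactor]

theorem ratio_update_snd (i : Fin n) (s : ℝ) :
    ratio (Function.update x (1, i) s) = Function.update (ratio x) i (s / x (0, i) : ℝ) := by
  ext k
  rcases eq_or_ne k i with rfl | hk
  · simp [ratio]
  · simp [ratio, hk]

variable {x}

theorem mul_pd_Fser {i : Fin n}
    (h : DifferentiableAt ℂ
      (fun w => multiSeries (cm α γ a b) (Function.update (ratio x) i w)) (ratio x i)) :
    x (1, i) * pd (1, i) (Fser α γ a b) x = prefactor α x * (ratio x i *
      deriv (fun w => multiSeries (cm α γ a b) (Function.update (ratio x) i w)) (ratio x i)) := by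
  have h_ratio : HasDerivAt (fun s : ℝ => ((s / x (0, i) : ℝ) : ℂ)) (1 / x (0, i) : ℝ) (x (1, i)) :=
    ((hasDerivAt_id _).div_const _).ofReal_comp
  have h_series := (h.hasDerivAt.comp_of_eq (x (1, i)) h_ratio rfl).const_mul (prefactor α x)
  have h_pd := h_series.deriv
  simp only [Function.comp_def] at h_pd
  simp only [pd, Fser_eq_prefactor_mul_multiSeries, prefactor_update_snd, ratio_update_snd, h_pd]
  rw [ratio]
  push_cast
  ring

theorem gfun_eq_prefactor_mul {t : ℝ} (hx : ∀ k, |x (1, k)| * |t| < x (0, k)) :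
    gfun α γ t x = prefactor α x * (t ^ (γ + 1) * ∏ k, (1 + t * ratio x k) ^ α k) := by
  rw [gfun, prefactor, mul_left_comm, ← Finset.prod_mul_distrib]
  congr 1
  refine Finset.prod_congr rfl fun k _ => ?_
  have hx₀ : 0 < x (0, k) := (by positivity : 0 ≤ |x (1, k)| * |t|).trans_lt (hx k)
  have h_base : 0 ≤ 1 + t * (x (1, k) / x (0, k)) := by
    rw [← mul_div_assoc, ← neg_le_iff_add_nonneg', le_div_iff₀ hx₀, neg_one_mul]
    exact (abs_lt.1 (by rw [mul_comm, abs_mul]; exact hx k)).1.le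
  have hx₀' : (x (0, k) : ℂ) ≠ 0 := Complex.ofReal_ne_zero.2 hx₀.ne'
  have h_mul := Complex.mul_cpow_ofReal_nonneg hx₀.le h_base (α k)
  push_cast [ratio] at h_mul ⊢
  rw [← h_mul, mul_add, mul_one, mul_left_comm, mul_div_cancel₀ _ hx₀', mul_comm (t : ℂ)]

theorem exists_norm_ratio_lt {T : ℝ} (hT : 0 < T) {k : Fin n} (hx : |x (1, k)| * T < x (0, k)) :
    ∃ r, ‖ratio x k‖ < r ∧ T * r < 1 := by
  have hx₀ : 0 < x (0, k) := (mul_nonneg (abs_nonneg _) hT.le).trans_lt hx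
  have h_ratio : ‖ratio x k‖ < T⁻¹ := by
    rw [ratio, Complex.norm_real, Real.norm_eq_abs, abs_div, abs_of_pos hx₀, div_lt_iff₀ hx₀,
      inv_mul_eq_div, lt_div_iff₀ hT]
    exact hx
  obtain ⟨r, hr, hrT⟩ := exists_between h_ratio
  exact ⟨r, hr, (lt_inv_mul_iff₀ hT).1 (by rwa [mul_one])⟩

end AffineCoordinates

theorem stmt9_general {n : ℕ} (α : Fin n → ℂ) (γ : ℂ) (a b : ℝ) (ha : a ≠ 0) (hb : b ≠ 0)
    (hγ : ∀ j : ℕ, γ ≠ -((j : ℂ) + 1)) (x : (Fin 2 × Fin n) → ℝ)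
    (hU : ∀ k, |x (1, k)| * max |a| |b| < x (0, k)) :
    ∑ i, (x (1, i) : ℂ) * pd (1, i) (Fser α γ a b) x
      + (γ + 1) * Fser α γ a b x
      = gfun α γ b x - gfun α γ a x := by
  have h_max : 0 < max |a| |b| := lt_max_of_lt_left (abs_pos.2 ha)
  choose R hy hR using fun k => exists_norm_ratio_lt h_max (hU k)
  have h_summable := summable_norm_cm_mul_pow α γ ha hb
    (fun k => (norm_nonneg _).trans (hy k).le) hR
  have h_pd (i) := mul_pd_Fser α γ a b (differentiableAt_multiSeries_update h_summable hy i)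
  have h_gfun {t : ℝ} (ht : |t| ≤ max |a| |b|) := gfun_eq_prefactor_mul α γ fun k =>
    (mul_le_mul_of_nonneg_left ht (abs_nonneg _)).trans_lt (hU k)
  have hγ' (j : ℕ) : γ + 1 + j ≠ 0 := fun h => hγ j (by linear_combination h)
  rw [h_gfun (le_max_right _ _), h_gfun (le_max_left _ _), ← mul_sub,
    ← euler_multiSeries_cm α γ ha hb hγ' hR hy, Fser_eq_prefactor_mul_multiSeries]
  simp only [h_pd, ← Finset.mul_sum]
  ring

/-- on `U₀` the series `F` satisfies the inhomogeneous equation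
`Σᵢ x_{2i}·∂F/∂x_{2i} + (γ+1)·F = g(b,x) − g(a,x)`. -/
theorem stmt9 {n : ℕ} (hn : 1 ≤ n) (α : Fin n → ℂ) (γ : ℂ) (a b : ℝ)
    (ha : 0 < a) (hab : a < b) (hγ : ∀ j : ℕ, γ ≠ -((j : ℂ) + 1))
    (x : (Fin 2 × Fin n) → ℝ) (hx : ∀ p, 0 < x p)
    (hU : ∀ k, x (1, k) * b < x (0, k)) :
    ∑ i, (x (1, i) : ℂ) * pd (1, i) (Fser α γ a b) x
      + (γ + 1) * Fser α γ a b x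
      = gfun α γ b x - gfun α γ a x :=
  stmt9_general α γ a b ha.ne' (ha.trans hab).ne' hγ x fun k => by
    simpa [abs_of_pos, ha, ha.trans hab, hx, max_eq_right hab.le] using hU k
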